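/- arXiv:math/9505205 — 2 statements merged into one kernel-verified Lean document; each statement's English description precedes it below -/
import Mathlib

section
/- Let m ≥ 3 and let σ, ρ_1, …, ρ_m : [0,1] → (0,∞) be continuously differentiable functions, with the subscripts of the ρ_i taken cyclically in {1,…,m} (so ρ_{m+1} := ρ_1 and a subscript i−1 with i=1 means ρ_m). Define Θ(t) = Σ_{i=1}^{m} arccos( 1 − 2ρ_i(t)ρ_{i+1}(t) / ((σ(t)+ρ_i(t))(σ(t)+ρ_{i+1}(t))) ). Then Θ is differentiable on [0,1] and for every t ∈ [0,1], Θ′(t) = Σ_{i=1}^{m} (1/(σ(t)+ρ_i(t))) · [ √( σ(t)ρ_i(t)ρ_{i−1}(t) / (σ(t)+ρ_i(t)+ρ_{i−1}(t)) ) + √( σ(t)ρ_i(t)ρ_{i+1}(t) / (σ(t)+ρ_i(t)+ρ_{i+1}(t)) ) ] · ( ρ_i′(t)/ρ_i(t) − σ′(t)/σ(t) ). -/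
open Real Set

lemma angle_hasDerivAt (a b c : ℝ → ℝ) (a' b' c' t : ℝ)
    (ha : 0 < a t) (hb : 0 < b t) (hc : 0 < c t)
    (da : HasDerivAt a a' t) (db : HasDerivAt b b' t) (dc : HasDerivAt c c' t) :
    HasDerivAt (fun t => Real.arccos (1 - 2 * b t * c t / ((a t + b t) * (a t + c t))))
      ((1 / (a t + b t)) * Real.sqrt (a t * b t * c t / (a t + b t + c t)) * (b' / b t - a' / a t)
       + (1 / (a t + c t)) * Real.sqrt (a t * b t * c t / (a t + b t + c t)) *
        (c' / c t - a' / a t)) t := by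
  have hne : (a t + b t) * (a t + c t) ≠ 0 := by positivity
  have h1 := (((db.const_mul 2).mul dc).div ((da.add db).mul (da.add dc)) hne).const_sub 1
  have hx0 : 0 < 2 * b t * c t / ((a t + b t) * (a t + c t)) := by positivity
  have hx1 : 2 * b t * c t / ((a t + b t) * (a t + c t)) < 2 := by
    rw [div_lt_iff₀ (by positivity)]
    nlinarith [mul_pos ha hb, mul_pos ha hc, mul_pos ha ha]
  have h2 := (Real.hasDerivAt_arccos
    (x := 1 - 2 * b t * c t / ((a t + b t) * (a t + c t))) (by linarith) (by linarith)).comp t h1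
  refine h2.congr_deriv ?_
  have hS0 : 0 < Real.sqrt (a t * b t * c t / (a t + b t + c t)) := Real.sqrt_pos.2 (by positivity)
  have hS2 : Real.sqrt (a t * b t * c t / (a t + b t + c t)) ^ 2
      = a t * b t * c t / (a t + b t + c t) := Real.sq_sqrt (by positivity)
  have hq : Real.sqrt (1 - (1 - 2 * b t * c t / ((a t + b t) * (a t + c t))) ^ 2)
      = 2 * Real.sqrt (a t * b t * c t / (a t + b t + c t)) * (a t + b t + c t)
        / ((a t + b t) * (a t + c t)) := by
    rw [Real.sqrt_eq_iff_mul_self_eq_of_pos (by positivity)]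
    rw [← pow_two, div_pow, mul_pow, mul_pow, hS2]
    field_simp
    ring
  rw [hq]
  simp only [Pi.add_apply, Pi.mul_apply]
  generalize Real.sqrt (a t * b t * c t / (a t + b t + c t)) = S at *
  generalize a t = A at *
  generalize b t = B at *
  generalize c t = C at *
  rw [eq_div_iff (by positivity)] at hS2
  have hs : 0 < A + B + C := by positivity
  have key : ∀ u v : ℝ, u * (S * (A + B + C)) * S = v * (S * (A + B + C)) * S → u = v := by
    intro u v h
    have : S * (A + B + C) ≠ 0 := by positivity
    exact mul_right_cancel₀ this (mul_right_cancel₀ hS0.ne' h)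
  apply key
  trans (((1 / (A + B)) * (b' / B - a' / A) + (1 / (A + C)) * (c' / C - a' / A)) * (A * B * C)) * S
  · field_simp
    ring
  · rw [← hS2]
    ring

/-- The derivative computation in the proof of Lemma 3.6: the angle sum `Θ`
at the center of a star (center label `σ`, boundary labels `ρ 1, …, ρ m`
taken cyclically, all C¹ in `t ∈ [0,1]`) is differentiable with the stated
derivative. -/
theorem star_angle_sum_hasDerivAt
    (m : ℕ) (hm : 3 ≤ m)
    (σ σ' : ℝ → ℝ) (ρ ρ' : ℤ → ℝ → ℝ)
    (hper : ∀ i : ℤ, ρ (i + m) = ρ i)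
    (hσpos : ∀ t ∈ Icc (0:ℝ) 1, 0 < σ t)
    (hρpos : ∀ i : ℤ, ∀ t ∈ Icc (0:ℝ) 1, 0 < ρ i t)
    (hσderiv : ∀ t ∈ Icc (0:ℝ) 1, HasDerivAt σ (σ' t) t)
    (hσcont : ContinuousOn σ' (Icc (0:ℝ) 1))
    (hρderiv : ∀ i : ℤ, ∀ t ∈ Icc (0:ℝ) 1, HasDerivAt (ρ i) (ρ' i t) t)
    (hρcont : ∀ i : ℤ, ContinuousOn (ρ' i) (Icc (0:ℝ) 1))
    (Θ : ℝ → ℝ)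
    (hΘ : ∀ t, Θ t = ∑ i ∈ Finset.Icc (1:ℤ) m,
      Real.arccos (1 - 2 * ρ i t * ρ (i+1) t /
        ((σ t + ρ i t) * (σ t + ρ (i+1) t)))) :
    ∀ t ∈ Icc (0:ℝ) 1,
      HasDerivAt Θ
        (∑ i ∈ Finset.Icc (1:ℤ) m,
          (1 / (σ t + ρ i t)) *
            (Real.sqrt (σ t * ρ i t * ρ (i-1) t / (σ t + ρ i t + ρ (i-1) t)) +
             Real.sqrt (σ t * ρ i t * ρ (i+1) t / (σ t + ρ i t + ρ (i+1) t))) *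
            (ρ' i t / ρ i t - σ' t / σ t)) t := by
  intro t ht
  have hper' : ∀ i : ℤ, ρ' (i + m) t = ρ' i t := fun i =>
    (hper i ▸ hρderiv (i + m) t ht).unique (hρderiv i t ht)
  have hfun : Θ = fun t => ∑ i ∈ Finset.Icc (1:ℤ) m,
      Real.arccos (1 - 2 * ρ i t * ρ (i+1) t /
        ((σ t + ρ i t) * (σ t + ρ (i+1) t))) := funext hΘ
  rw [hfun]
  have h := HasDerivAt.fun_sum (u := Finset.Icc (1:ℤ) m) (fun i _ =>
    angle_hasDerivAt σ (ρ i) (ρ (i+1)) (σ' t) (ρ' i t) (ρ' (i+1) t) t (hσpos t ht)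
      (hρpos i t ht) (hρpos (i+1) t ht) (hσderiv t ht) (hρderiv i t ht) (hρderiv (i+1) t ht))
  refine h.congr_deriv ?_
  set G : ℤ → ℝ := fun i => (1 / (σ t + ρ i t)) *
    Real.sqrt (σ t * ρ i t * ρ (i-1) t / (σ t + ρ i t + ρ (i-1) t)) *
      (ρ' i t / ρ i t - σ' t / σ t) with hG
  have hshift : ∑ i ∈ Finset.Icc (1:ℤ) m, G (i+1) = ∑ i ∈ Finset.Icc (1:ℤ) m, G i := by
    have hGm : G (m + 1) = G 1 := by
      have e1 : ((m:ℤ) + 1) = 1 + m := by ring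
      have e2 : (1 + (m:ℤ) - 1) = (1 - 1) + m := by ring
      simp only [hG, e1, e2, hper, hper']
    have tel : ∀ n : ℕ, ∑ i ∈ Finset.Icc (1:ℤ) n, (G (i+1) - G i) = G (n + 1) - G 1 := by
      intro n
      induction n with
      | zero => simp
      | succ k ih =>
        have : Finset.Icc (1:ℤ) ((k+1 : ℕ) : ℤ)
            = insert ((k:ℤ) + 1) (Finset.Icc (1:ℤ) k) := by
          ext x
          simp only [Finset.mem_Icc, Finset.mem_insert]
          omega
        rw [this, Finset.sum_insert (by simp), ih]
        push_cast
        ring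
    have := tel m
    rw [Finset.sum_sub_distrib, hGm] at this
    linarith
  rw [Finset.sum_add_distrib]
  trans (∑ i ∈ Finset.Icc (1:ℤ) m, (1 / (σ t + ρ i t)) *
    Real.sqrt (σ t * ρ i t * ρ (i+1) t / (σ t + ρ i t + ρ (i+1) t)) *
      (ρ' i t / ρ i t - σ' t / σ t)) + ∑ i ∈ Finset.Icc (1:ℤ) m, G (i+1)
  · congr 1
    refine Finset.sum_congr rfl fun i _ => ?_
    simp only [hG, add_sub_cancel_right]
    rw [mul_right_comm (σ t) (ρ (i+1) t), add_right_comm (σ t) (ρ (i+1) t)]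
  · rw [hshift, ← Finset.sum_add_distrib]
    refine Finset.sum_congr rfl fun i _ => ?_
    simp only [hG]
    ring
end

section
/- Let L = { a + b·ω : a, b ∈ ℤ } ⊂ ℂ with ω = exp(iπ/3) be the triangular lattice, so that each v ∈ L has the six neighbors v + ω^k, k = 0,…,5, in cyclic order. For ρ : L → (0,∞) define the angle sum Θ_ρ(v) = Σ_{k=0}^{5} arccos( 1 − 2ρ(v+ω^k)ρ(v+ω^{k+1}) / ((ρ(v)+ρ(v+ω^k))(ρ(v)+ρ(v+ω^{k+1}))) ), indices k taken mod 6. If ρ, ρ̃ : L → (0,∞) satisfy Θ_ρ(v) = Θ_{ρ̃}(v) for every v ∈ L, then either both ratio functions v ↦ ρ̃(v)/ρ(v) and v ↦ ρ(v)/ρ̃(v) are unbounded, or both are constant. -/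
open Real Set

/-- `ω = exp(iπ/3)`, a primitive sixth root of unity. -/
noncomputable def hexω : ℂ := Complex.exp ((Real.pi / 3 : ℂ) * Complex.I)

/-- The triangular lattice `L = {a + b·ω : a, b ∈ ℤ} ⊂ ℂ`. -/
def hexLattice : Set ℂ := {z | ∃ a b : ℤ, z = (a : ℂ) + (b : ℂ) * hexω}

/-- The angle sum of the label `ρ` at a vertex `v` of the triangular lattice:
the neighbors of `v` are `v + ω^k`, `k = 0, …, 5`, in cyclic order. -/
noncomputable def hexAngleSum (ρ : ℂ → ℝ) (v : ℂ) : ℝ :=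
  ∑ k ∈ Finset.range 6,
    Real.arccos (1 - 2 * ρ (v + hexω ^ k) * ρ (v + hexω ^ (k + 1)) /
      ((ρ v + ρ (v + hexω ^ k)) * (ρ v + ρ (v + hexω ^ (k + 1)))))


noncomputable def hexKern (x y z : ℝ) : ℝ := √(x * y * z / (x + y + z)) / (x + y)

lemma hexKern_pos {x y z : ℝ} (hx : 0 < x) (hy : 0 < y) (hz : 0 < z) : 0 < hexKern x y z := by
  unfold hexKern; positivity

lemma hexKern_le {x y z : ℝ} (hx : 0 < x) (hy : 0 < y) (hz : 0 < z) : hexKern x y z ≤ 1 / 2 := by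
  unfold hexKern
  rw [div_le_iff₀ (by positivity), Real.sqrt_le_iff]
  refine ⟨by positivity, ?_⟩
  rw [div_le_iff₀ (by positivity)]
  have h1 : x * y * z ≤ x * y * (x + y + z) := by gcongr; linarith
  have h2 : x * y * (x + y + z) ≤ (1 / 2 * (x + y)) ^ 2 * (x + y + z) := by
    gcongr; nlinarith [sq_nonneg (x - y)]
  linarith

lemma hexKern_comm (x y z : ℝ) : hexKern x y z = hexKern y x z := by
  unfold hexKern; rw [mul_comm x y, add_comm x y]

lemma hexAngle_deriv {r1 r2 r3 : ℝ} (h1 : 0 < r1) (h2 : 0 < r2) (h3 : 0 < r3) (u1 u2 u3 t : ℝ) :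
    HasDerivAt (fun t : ℝ => Real.arccos (1 - 2 * (r2 * exp (t * u2)) * (r3 * exp (t * u3)) /
      ((r1 * exp (t * u1) + r2 * exp (t * u2)) * (r1 * exp (t * u1) + r3 * exp (t * u3)))))
      (hexKern (r1 * exp (t * u1)) (r2 * exp (t * u2)) (r3 * exp (t * u3)) * (u2 - u1) +
       hexKern (r1 * exp (t * u1)) (r3 * exp (t * u3)) (r2 * exp (t * u2)) * (u3 - u1)) t := by
  have hd : ∀ r u : ℝ, HasDerivAt (fun t : ℝ => r * exp (t * u)) (r * exp (t * u) * u) t := by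
    intro r u
    have := (((hasDerivAt_id t).mul_const u).exp).const_mul r
    refine HasDerivAt.congr_deriv this ?_
    simp only [id_eq, one_mul]; ring
  have d1 := hd r1 u1
  have d2 := hd r2 u2
  have d3 := hd r3 u3
  have p1 : 0 < r1 * exp (t * u1) := by positivity
  have p2 : 0 < r2 * exp (t * u2) := by positivity
  have p3 : 0 < r3 * exp (t * u3) := by positivity
  have dx := (((d2.const_mul 2).mul d3).div ((d1.add d2).mul (d1.add d3))
    (by simp only [Pi.mul_apply, Pi.add_apply]; positivity)).const_sub 1
  simp only [Pi.mul_apply, Pi.add_apply, Pi.div_apply] at dx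
  generalize hX : r1 * exp (t * u1) = X at *
  generalize hY : r2 * exp (t * u2) = Y at *
  generalize hZ : r3 * exp (t * u3) = Z at *
  have e : X ^ 2 + X * Y + X * Z + Y * Z = (X + Y) * (X + Z) := by ring
  have l1 : 1 - 2 * Y * Z / ((X + Y) * (X + Z)) ≠ -1 := by
    have : 2 * Y * Z / ((X + Y) * (X + Z)) < 2 := by
      rw [div_lt_iff₀ (by positivity)]; nlinarith [mul_pos p1 p2, mul_pos p1 p3, mul_pos p1 p1]
    intro h; linarith
  have l2 : 1 - 2 * Y * Z / ((X + Y) * (X + Z)) ≠ 1 := by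
    have : 0 < 2 * Y * Z / ((X + Y) * (X + Z)) := by positivity
    intro h; linarith
  have da := Real.hasDerivAt_arccos l1 l2
  have hq : 0 < √(X * Y * Z / (X + Y + Z)) := by positivity
  have hqq : √(X * Y * Z / (X + Y + Z)) ^ 2 * (X + Y + Z) = X * Y * Z := by
    rw [Real.sq_sqrt (by positivity)]; field_simp
  have k1 : hexKern X Y Z = √(X * Y * Z / (X + Y + Z)) / (X + Y) := rfl
  have k2 : hexKern X Z Y = √(X * Y * Z / (X + Y + Z)) / (X + Z) := by
    unfold hexKern; congr 3 <;> ring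
  rw [k1, k2]
  generalize √(X * Y * Z / (X + Y + Z)) = q at *
  have hs : √(1 - (1 - 2 * Y * Z / ((X + Y) * (X + Z))) ^ 2)
      = 2 * q * (X + Y + Z) / ((X + Y) * (X + Z)) := by
    rw [Real.sqrt_eq_iff_mul_self_eq_of_pos (by positivity)]
    have : (2 * q * (X + Y + Z) / ((X + Y) * (X + Z))) ^ 2
        = 4 * (q ^ 2 * (X + Y + Z)) * (X + Y + Z) / ((X + Y) * (X + Z)) ^ 2 := by
      field_simp
      ring
    have h := this
    rw [hqq] at h
    rw [← pow_two, h]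
    field_simp
    ring
  rw [hs] at da
  rw [← hX, ← hY, ← hZ] at da
  have := HasDerivAt.comp t da dx
  rw [hX, hY, hZ] at this
  refine this.congr_deriv ?_
  have hS : 0 < X + Y + Z := by positivity
  have hq' : X * Y * Z / (q * (X + Y + Z)) = q := by
    rw [div_eq_iff (by positivity), ← hqq]; ring
  rw [← hq']
  field_simp
  rw [hqq]
  field_simp
  ring

noncomputable def hexK (r1 r2 r3 u1 u2 u3 : ℝ) : ℝ :=
  ∫ t in (0:ℝ)..1, hexKern (r1 * exp (t * u1)) (r2 * exp (t * u2)) (r3 * exp (t * u3))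

lemma hexKern_cont {r1 r2 r3 : ℝ} (h1 : 0 < r1) (h2 : 0 < r2) (h3 : 0 < r3) (u1 u2 u3 : ℝ) :
    Continuous (fun t : ℝ => hexKern (r1 * exp (t * u1)) (r2 * exp (t * u2)) (r3 * exp (t * u3))) := by
  unfold hexKern
  refine Continuous.div (Real.continuous_sqrt.comp (Continuous.div (by fun_prop) (by fun_prop) ?_))
    (by fun_prop) ?_ <;> intro t <;> positivity

lemma hexK_comm (r1 r2 r3 u1 u2 u3 : ℝ) : hexK r1 r2 r3 u1 u2 u3 = hexK r2 r1 r3 u2 u1 u3 := by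
  unfold hexK; simp_rw [hexKern_comm (r1 * _)]

lemma hexK_pos {r1 r2 r3 : ℝ} (h1 : 0 < r1) (h2 : 0 < r2) (h3 : 0 < r3) (u1 u2 u3 : ℝ) :
    0 < hexK r1 r2 r3 u1 u2 u3 := by
  unfold hexK
  apply intervalIntegral.intervalIntegral_pos_of_pos
  · exact (hexKern_cont h1 h2 h3 u1 u2 u3).intervalIntegrable _ _
  · intro t; apply hexKern_pos <;> positivity
  · norm_num

lemma hexK_le {r1 r2 r3 : ℝ} (h1 : 0 < r1) (h2 : 0 < r2) (h3 : 0 < r3) (u1 u2 u3 : ℝ) :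
    hexK r1 r2 r3 u1 u2 u3 ≤ 1 / 2 := by
  have : hexK r1 r2 r3 u1 u2 u3 ≤ ∫ t in (0:ℝ)..1, (1 / 2 : ℝ) := by
    unfold hexK
    apply intervalIntegral.integral_mono_on (by norm_num)
    · exact (hexKern_cont h1 h2 h3 u1 u2 u3).intervalIntegrable _ _
    · exact continuous_const.intervalIntegrable _ _
    · intro t _; apply hexKern_le <;> positivity
  simpa using this

lemma hexAngle_diff {r1 r2 r3 s1 s2 s3 : ℝ} (h1 : 0 < r1) (h2 : 0 < r2) (h3 : 0 < r3)
    {u1 u2 u3 : ℝ} (k1 : s1 = r1 * exp u1) (k2 : s2 = r2 * exp u2) (k3 : s3 = r3 * exp u3) :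
    Real.arccos (1 - 2 * s2 * s3 / ((s1 + s2) * (s1 + s3))) -
    Real.arccos (1 - 2 * r2 * r3 / ((r1 + r2) * (r1 + r3))) =
    hexK r1 r2 r3 u1 u2 u3 * (u2 - u1) + hexK r1 r3 r2 u1 u3 u2 * (u3 - u1) := by
  have c1 := (hexKern_cont h1 h2 h3 u1 u2 u3).mul_const (u2 - u1)
  have c2 := (hexKern_cont h1 h3 h2 u1 u3 u2).mul_const (u3 - u1)
  have := intervalIntegral.integral_eq_sub_of_hasDerivAt (a := 0) (b := 1)
    (fun t _ => hexAngle_deriv h1 h2 h3 u1 u2 u3 t) ((c1.add c2).intervalIntegrable _ _)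
  rw [intervalIntegral.integral_add (c1.intervalIntegrable _ _) (c2.intervalIntegrable _ _),
    intervalIntegral.integral_mul_const, intervalIntegral.integral_mul_const] at this
  simp only [one_mul, zero_mul, exp_zero, mul_one] at this
  rw [k1, k2, k3, ← this]
  rfl

noncomputable def hexS (n : ℕ) : ℝ := ∑ i ∈ Finset.range n, (1 / ((i : ℝ) + 1))

lemma hexS_succ (n : ℕ) : hexS (n + 1) = hexS n + 1 / ((n : ℝ) + 1) := Finset.sum_range_succ _ _

lemma hexS_mono : Monotone hexS := monotone_nat_of_le_succ fun n => by
  rw [hexS_succ]; have : 0 < 1 / ((n : ℝ) + 1) := by positivity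
  linarith

lemma hexS_tendsto : Filter.Tendsto hexS Filter.atTop Filter.atTop :=
  Real.tendsto_sum_range_one_div_nat_succ_atTop

noncomputable def hexH (R n : ℕ) : ℝ := max 0 (1 - hexS n / hexS R)

lemma hexS_one_le {R : ℕ} (hR : 1 ≤ R) : 1 ≤ hexS R := by
  have := hexS_mono hR
  simpa [hexS] using this

lemma hexH_zero {R n : ℕ} (hR : 1 ≤ R) (h : R ≤ n) : hexH R n = 0 := by
  have h1 := hexS_one_le hR
  have h2 := hexS_mono h
  unfold hexH
  rw [max_eq_left]
  rw [sub_nonpos, le_div_iff₀ (by linarith)]; linarith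

lemma hexH_step {R : ℕ} (hR : 1 ≤ R) (n : ℕ) :
    |hexH R n - hexH R (n + 1)| ≤ 1 / ((n : ℝ) + 1) / hexS R := by
  have h1 := hexS_one_le hR
  unfold hexH
  refine (abs_max_sub_max_le_max _ _ _ _).trans ?_
  have : 1 - hexS n / hexS R - (1 - hexS (n + 1) / hexS R) = 1 / ((n : ℝ) + 1) / hexS R := by
    rw [hexS_succ]; ring
  rw [this]
  have : 0 ≤ 1 / ((n : ℝ) + 1) / hexS R := by positivity
  rw [abs_of_nonneg this, sub_zero, abs_zero]
  exact max_le this le_rfl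

lemma hexH_step' {R : ℕ} (hR : 1 ≤ R) (n m : ℕ) (h1 : n ≤ m + 1) (h2 : m ≤ n + 1) :
    (hexH R n - hexH R m) ^ 2 ≤ 4 / ((n : ℝ) + 1) ^ 2 / hexS R ^ 2 := by
  have hS := hexS_one_le hR
  have e : 4 / ((n : ℝ) + 1) ^ 2 / hexS R ^ 2 = (2 / ((n : ℝ) + 1) / hexS R) ^ 2 := by
    rw [div_pow, div_pow]; norm_num
  rw [e, sq_le_sq]
  rw [abs_of_nonneg (a := 2 / ((n : ℝ) + 1) / hexS R) (by positivity)]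
  rcases (by omega : n = m ∨ m = n + 1 ∨ n = m + 1) with h | h | h
  · subst h; simp; positivity
  · subst h; refine (hexH_step hR n).trans ?_
    gcongr; norm_num
  · subst h; rw [abs_sub_comm]; refine (hexH_step hR m).trans ?_
    gcongr ?_ / _
    rw [div_le_div_iff₀ (by positivity) (by positivity)]; push_cast; linarith

def hexN (v : ℤ × ℤ) : ℕ := max v.1.natAbs v.2.natAbs

noncomputable def hexφ (R : ℕ) (v : ℤ × ℤ) : ℝ := hexH R (hexN v)

noncomputable def hexBox (R : ℕ) : Finset (ℤ × ℤ) := (Finset.range R).biUnion fun n => Finset.box n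

lemma mem_hexBox {R : ℕ} {v : ℤ × ℤ} : v ∈ hexBox R ↔ hexN v < R := by
  simp [hexBox, Int.mem_box, hexN]

lemma hexBox_sum_le (R : ℕ) (F : ℕ → ℝ) (hF : ∀ n, 0 ≤ F n) :
    ∑ v ∈ hexBox R, F (hexN v) ≤ ∑ n ∈ Finset.range R, 8 * ((n : ℝ) + 1) * F n := by
  unfold hexBox
  rw [Finset.sum_biUnion]
  · apply Finset.sum_le_sum
    intro n _
    have : ∑ v ∈ (Finset.box n : Finset (ℤ × ℤ)), F (hexN v) =
        ∑ v ∈ (Finset.box n : Finset (ℤ × ℤ)), F n := by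
      apply Finset.sum_congr rfl
      intro v hv; rw [Int.mem_box] at hv; unfold hexN; rw [hv]
    rw [this, Finset.sum_const, nsmul_eq_mul]
    apply mul_le_mul_of_nonneg_right _ (hF n)
    rcases Nat.eq_zero_or_pos n with h | h
    · subst h; simp
    · rw [Int.card_box h.ne']; push_cast; linarith
  · intro a _ b _ hab
    exact Finset.disjoint_left.2 fun v h1 h2 => hab (by rw [Int.mem_box] at h1 h2; omega)

/-- energy estimate in one direction -/
lemma hexφ_energy {R : ℕ} (hR : 1 ≤ R) (e : ℤ × ℤ) (he : hexN e ≤ 1)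
    (B : Finset (ℤ × ℤ)) :
    ∑ v ∈ B, (hexφ R v - hexφ R (v + e)) ^ 2 ≤ 64 / hexS R := by
  have hS := hexS_one_le hR
  have hn : ∀ v, hexN v ≤ hexN (v + e) + 1 ∧ hexN (v + e) ≤ hexN v + 1 := by
    intro v; unfold hexN at *; simp only [Prod.fst_add, Prod.snd_add]; omega
  have s1 : ∑ v ∈ B, (hexφ R v - hexφ R (v + e)) ^ 2
      ≤ ∑ v ∈ hexBox (R + 1), (hexφ R v - hexφ R (v + e)) ^ 2 := by
    refine (Finset.sum_le_sum_of_subset_of_nonneg (Finset.subset_union_left (s₂ := hexBox (R + 1)))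
      (fun v _ _ => sq_nonneg _)).trans (le_of_eq ?_)
    symm
    refine Finset.sum_subset Finset.subset_union_right ?_
    intro v _ hv
    rw [mem_hexBox] at hv
    have := hn v
    unfold hexφ
    rw [hexH_zero hR (by omega), hexH_zero hR (by omega)]; simp
  have s2 : ∑ v ∈ hexBox (R + 1), (hexφ R v - hexφ R (v + e)) ^ 2
      ≤ ∑ v ∈ hexBox (R + 1), 4 / ((hexN v : ℝ) + 1) ^ 2 / hexS R ^ 2 :=
    Finset.sum_le_sum fun v _ => hexH_step' hR _ _ (hn v).1 (hn v).2
  have s3 := hexBox_sum_le (R + 1) (fun n => 4 / ((n : ℝ) + 1) ^ 2 / hexS R ^ 2)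
    (fun n => by positivity)
  have s4 : ∑ n ∈ Finset.range (R + 1), 8 * ((n : ℝ) + 1) * (4 / ((n : ℝ) + 1) ^ 2 / hexS R ^ 2)
      = 32 * hexS (R + 1) / hexS R ^ 2 := by
    rw [show hexS (R + 1) = ∑ i ∈ Finset.range (R + 1), (1 / ((i : ℝ) + 1)) from rfl, Finset.mul_sum, Finset.sum_div]
    apply Finset.sum_congr rfl
    intro n _
    field_simp
    norm_num
  have s5 : 32 * hexS (R + 1) / hexS R ^ 2 ≤ 64 / hexS R := by
    rw [div_le_div_iff₀ (by positivity) (by positivity), hexS_succ]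
    have : 1 / ((R : ℝ) + 1) ≤ 1 := by
      rw [div_le_one (by positivity)]; have : (0:ℝ) ≤ R := by positivity
      linarith
    have : 32 * (hexS R + 1 / ((R : ℝ) + 1)) ≤ 64 * hexS R := by linarith
    nlinarith
  linarith

/-- summation by parts -/
lemma hex_parts (ψ D : ℤ × ℤ → ℝ) (e : ℤ × ℤ) (hψ : ψ.support.Finite) :
    ∑ᶠ v, ψ v * (D v - D (v - e)) = ∑ᶠ v, (ψ v - ψ (v + e)) * D v := by
  have f1 : (fun v => ψ v * D v).support.Finite := hψ.subset (Function.support_mul_subset_left _ _)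
  have f2 : (fun v => ψ v * D (v - e)).support.Finite :=
    hψ.subset (Function.support_mul_subset_left _ _)
  have f3 : (fun v => ψ (v + e) * D v).support.Finite := by
    refine Set.Finite.subset (hψ.preimage (f := fun v => v + e) (add_left_injective e).injOn) ?_
    intro v hv; simp at hv ⊢; exact hv.1
  simp_rw [mul_sub, sub_mul]
  rw [finsum_sub_distrib f1 f2, finsum_sub_distrib f1 f3]
  congr 1
  rw [← finsum_comp_equiv (Equiv.addRight e)]
  simp

lemma hex_picone {a b p q : ℝ} (ha : 0 < a) (hb : 0 < b) :
    (p ^ 2 / a - q ^ 2 / b) * (b - a) = (p ^ 2 * b / a + q ^ 2 * a / b - 2 * p * q) - (p - q) ^ 2 := by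
  field_simp; ring

lemma hex_picone_nonneg {a b p q : ℝ} (ha : 0 < a) (hb : 0 < b) :
    0 ≤ p ^ 2 * b / a + q ^ 2 * a / b - 2 * p * q := by
  have : p ^ 2 * b / a + q ^ 2 * a / b - 2 * p * q = (p * b - q * a) ^ 2 / (a * b) := by
    field_simp; ring
  rw [this]; positivity

lemma hexφ_tendsto (v : ℤ × ℤ) :
    Filter.Tendsto (fun R => hexφ R v) Filter.atTop (nhds 1) := by
  unfold hexφ hexH
  have h : Filter.Tendsto (fun R => hexS (hexN v) / hexS R) Filter.atTop (nhds 0) :=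
    hexS_tendsto.const_div_atTop _
  have := (tendsto_const_nhds (x := (0:ℝ))).max ((tendsto_const_nhds (x := (1:ℝ))).sub h)
  simpa using this

lemma hex_liouville (e : Fin 3 → ℤ × ℤ) (he : ∀ i, hexN (e i) ≤ 1)
    (C : Fin 3 → ℤ × ℤ → ℝ) (hC : ∀ i v, 0 < C i v) (hC1 : ∀ i v, C i v ≤ 1)
    (w : ℤ × ℤ → ℝ) (hw : ∀ v, 0 < w v)
    (heq : ∀ v, ∑ i, (C i v * (w (v + e i) - w v) + C i (v - e i) * (w (v - e i) - w v)) = 0)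
    (i₀ : Fin 3) (v₀ : ℤ × ℤ) : w (v₀ + e i₀) = w v₀ := by
  -- the pointwise Picone term
  let G : ℕ → Fin 3 → ℤ × ℤ → ℝ := fun R i v =>
    (hexφ R v) ^ 2 * w (v + e i) / w v + (hexφ R (v + e i)) ^ 2 * w v / w (v + e i)
      - 2 * hexφ R v * hexφ R (v + e i)
  have hG : ∀ R i v, 0 ≤ G R i v := fun R i v => hex_picone_nonneg (hw _) (hw _)
  have key : ∀ R : ℕ, 1 ≤ R → C i₀ v₀ * G R i₀ v₀ ≤ 192 / hexS R := by
    intro R hR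
    have hS := hexS_one_le hR
    let ψ : ℤ × ℤ → ℝ := fun v => (hexφ R v) ^ 2 / w v
    have hz : ∀ v, v ∉ hexBox R → hexφ R v = 0 := by
      intro v hv; rw [mem_hexBox] at hv
      exact hexH_zero hR (by omega)
    have hψz : ∀ v, v ∉ hexBox R → ψ v = 0 := by
      intro v hv; simp [ψ, hz v hv]
    have hψ : ψ.support.Finite := (hexBox R).finite_toSet.subset (by
      intro v hv; by_contra h; exact hv (hψz v (by simpa using h)))
    let D : Fin 3 → ℤ × ℤ → ℝ := fun i v => C i v * (w (v + e i) - w v)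
    have h0 : ∑ i, ∑ᶠ v, ψ v * (D i v - D i (v - e i)) = 0 := by
      rw [← finsum_sum_comm]
      · rw [← finsum_zero (α := ℤ × ℤ)]
        apply finsum_congr
        intro v
        rw [← Finset.mul_sum]
        have : ∑ i, (D i v - D i (v - e i)) = 0 := by
          rw [← heq v]
          apply Finset.sum_congr rfl
          intro i _
          simp only [D, sub_add_cancel]; ring
        rw [this, mul_zero]
      · intro i _
        exact hψ.subset (Function.support_mul_subset_left _ _)
    simp_rw [hex_parts ψ _ _ hψ] at h0
    let B : Finset (ℤ × ℤ) := insert v₀ (hexBox (R + 1))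
    have hB : ∀ i v, v ∉ B → (ψ v - ψ (v + e i)) * D i v = 0 := by
      intro i v hv
      have h1 : v ∉ hexBox (R + 1) := fun h => hv (Finset.mem_insert_of_mem h)
      rw [mem_hexBox] at h1
      have := he i
      have h2 : R ≤ hexN (v + e i) := by
        unfold hexN at *; simp only [Prod.fst_add, Prod.snd_add]; omega
      rw [hψz v (by rw [mem_hexBox]; omega), hψz (v + e i) (by rw [mem_hexBox]; omega)]
      simp
    have h1 : ∀ i, ∑ᶠ v, (ψ v - ψ (v + e i)) * D i v = ∑ v ∈ B, (ψ v - ψ (v + e i)) * D i v := by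
      intro i
      apply finsum_eq_sum_of_support_subset
      intro v hv; by_contra h; exact hv (hB i v (by simpa using h))
    simp_rw [h1] at h0
    have h2 : ∀ i v, (ψ v - ψ (v + e i)) * D i v
        = C i v * G R i v - C i v * (hexφ R v - hexφ R (v + e i)) ^ 2 := by
      intro i v
      rw [← mul_sub, ← hex_picone (hw v) (hw (v + e i))]
      simp only [ψ, D]; ring
    simp_rw [h2, Finset.sum_sub_distrib] at h0
    have h3 : C i₀ v₀ * G R i₀ v₀ ≤ ∑ i, ∑ v ∈ B, C i v * G R i v := by
      have a1 : C i₀ v₀ * G R i₀ v₀ ≤ ∑ v ∈ B, C i₀ v * G R i₀ v :=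
        Finset.single_le_sum (f := fun v => C i₀ v * G R i₀ v)
          (fun v _ => mul_nonneg (hC _ _).le (hG _ _ _)) (Finset.mem_insert_self _ _)
      refine a1.trans ?_
      exact Finset.single_le_sum (f := fun i => ∑ v ∈ B, C i v * G R i v)
          (fun i _ => Finset.sum_nonneg fun v _ => mul_nonneg (hC _ _).le (hG _ _ _))
          (Finset.mem_univ _)
    have h4 : ∑ i, ∑ v ∈ B, C i v * (hexφ R v - hexφ R (v + e i)) ^ 2
        ≤ ∑ i : Fin 3, 64 / hexS R := by
      apply Finset.sum_le_sum
      intro i _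
      refine le_trans (Finset.sum_le_sum ?_) (hexφ_energy hR (e i) (he i) B)
      intro v _
      have := hC1 i v
      nlinarith [sq_nonneg (hexφ R v - hexφ R (v + e i))]
    have h5 : ∑ i : Fin 3, 64 / hexS R = 192 / hexS R := by
      simp; ring
    linarith
  have t1 : Filter.Tendsto (fun R => C i₀ v₀ * G R i₀ v₀) Filter.atTop
      (nhds (C i₀ v₀ * (1 ^ 2 * w (v₀ + e i₀) / w v₀ + 1 ^ 2 * w v₀ / w (v₀ + e i₀) - 2 * 1 * 1))) := by
    have a := hexφ_tendsto v₀
    have b := hexφ_tendsto (v₀ + e i₀)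
    exact (((((a.pow 2).mul_const _).div_const _).add (((b.pow 2).mul_const _).div_const _)).sub
      ((a.const_mul 2).mul b)).const_mul _
  have t2 : Filter.Tendsto (fun R => 192 / hexS R) Filter.atTop (nhds 0) :=
    hexS_tendsto.const_div_atTop _
  have hle := le_of_tendsto_of_tendsto t1 t2
    (Filter.eventually_atTop.2 ⟨1, fun R hR => key R hR⟩)
  have ha := hw v₀
  have hb := hw (v₀ + e i₀)
  generalize w v₀ = a at *
  generalize w (v₀ + e i₀) = b at *
  have e1 : C i₀ v₀ * (1 ^ 2 * b / a + 1 ^ 2 * a / b - 2 * 1 * 1)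
      = C i₀ v₀ / (a * b) * (b - a) ^ 2 := by field_simp; ring
  rw [e1] at hle
  have : 0 < C i₀ v₀ / (a * b) := div_pos (hC _ _) (by positivity)
  have : (b - a) ^ 2 ≤ 0 := by
    by_contra hh; push Not at hh; nlinarith [mul_pos this hh]
  nlinarith [pow_eq_zero_iff (two_ne_zero) |>.1 (le_antisymm this (sq_nonneg _))]

lemma hexω_eq : hexω = 1 / 2 + (√3 / 2 : ℝ) * Complex.I := by
  unfold hexω
  rw [show ((Real.pi / 3 : ℂ)) = ((Real.pi / 3 : ℝ) : ℂ) by push_cast; rfl, Complex.exp_mul_I,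
    ← Complex.ofReal_cos, ← Complex.ofReal_sin, Real.cos_pi_div_three, Real.sin_pi_div_three]
  push_cast; rfl

lemma hexω_sq : hexω ^ 2 = hexω - 1 := by
  rw [hexω_eq]
  have h : ((√3 / 2 : ℝ) : ℂ) ^ 2 = 3 / 4 := by
    rw [← Complex.ofReal_pow, div_pow, Real.sq_sqrt (by norm_num)]; push_cast; norm_num
  linear_combination Complex.I ^ 2 * h + (3 / 4) * Complex.I_sq

noncomputable def hexPt (a b : ℤ) : ℂ := (a : ℂ) + (b : ℂ) * hexω

lemma hexPt_mem (a b : ℤ) : hexPt a b ∈ hexLattice := ⟨a, b, rfl⟩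

noncomputable def hexA (x y z : ℝ) : ℝ := Real.arccos (1 - 2 * y * z / ((x + y) * (x + z)))

lemma hexAngleSum_pt (ρ : ℂ → ℝ) (a b : ℤ) :
    hexAngleSum ρ (hexPt a b) =
      hexA (ρ (hexPt a b)) (ρ (hexPt (a + 1) b)) (ρ (hexPt a (b + 1))) +
      hexA (ρ (hexPt a b)) (ρ (hexPt a (b + 1))) (ρ (hexPt (a - 1) (b + 1))) +
      hexA (ρ (hexPt a b)) (ρ (hexPt (a - 1) (b + 1))) (ρ (hexPt (a - 1) b)) +
      hexA (ρ (hexPt a b)) (ρ (hexPt (a - 1) b)) (ρ (hexPt a (b - 1))) +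
      hexA (ρ (hexPt a b)) (ρ (hexPt a (b - 1))) (ρ (hexPt (a + 1) (b - 1))) +
      hexA (ρ (hexPt a b)) (ρ (hexPt (a + 1) (b - 1))) (ρ (hexPt (a + 1) b)) := by
  have h := hexω_sq
  have e0 : hexPt a b + hexω ^ 0 = hexPt (a + 1) b := by
    simp only [hexPt]; push_cast; ring
  have e1 : hexPt a b + hexω ^ 1 = hexPt a (b + 1) := by
    simp only [hexPt]; push_cast; ring
  have e2 : hexPt a b + hexω ^ 2 = hexPt (a - 1) (b + 1) := by
    simp only [hexPt]; push_cast; linear_combination h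
  have e3 : hexPt a b + hexω ^ 3 = hexPt (a - 1) b := by
    simp only [hexPt]; push_cast; linear_combination (hexω + 1) * h
  have e4 : hexPt a b + hexω ^ 4 = hexPt a (b - 1) := by
    simp only [hexPt]; push_cast; linear_combination (hexω ^ 2 + hexω) * h
  have e5 : hexPt a b + hexω ^ 5 = hexPt (a + 1) (b - 1) := by
    simp only [hexPt]; push_cast; linear_combination (hexω ^ 3 + hexω ^ 2 - 1) * h
  have e6 : hexPt a b + hexω ^ 6 = hexPt (a + 1) b := by
    simp only [hexPt]; push_cast; linear_combination (hexω ^ 4 + hexω ^ 3 - hexω - 1) * h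
  unfold hexAngleSum
  simp only [Finset.sum_range_succ, Finset.sum_range_zero, zero_add, Nat.reduceAdd,
    e0, e1, e2, e3, e4, e5, e6]
  rfl

lemma hex_core (ρ σ : ℂ → ℝ)
    (hρ : ∀ v ∈ hexLattice, 0 < ρ v)
    (hσ : ∀ v ∈ hexLattice, 0 < σ v)
    (hΘ : ∀ v ∈ hexLattice, hexAngleSum ρ v = hexAngleSum σ v)
    (M : ℝ) (hM : ∀ v ∈ hexLattice, σ v / ρ v ≤ M) :
    ∃ c : ℝ, ∀ v ∈ hexLattice, σ v / ρ v = c := by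
  let f : ℤ → ℤ → ℝ := fun a b => ρ (hexPt a b)
  let g : ℤ → ℤ → ℝ := fun a b => σ (hexPt a b)
  let u : ℤ → ℤ → ℝ := fun a b => Real.log (g a b / f a b)
  have hf : ∀ a b, 0 < f a b := fun a b => hρ _ (hexPt_mem a b)
  have hg : ∀ a b, 0 < g a b := fun a b => hσ _ (hexPt_mem a b)
  have hgu : ∀ a b, g a b = f a b * exp (u a b) := by
    intro a b
    have := hf a b
    have := hg a b
    simp only [u]
    rw [Real.exp_log (by positivity)]; field_simp
  let K : ℤ → ℤ → ℤ → ℤ → ℤ → ℤ → ℝ := fun a b c d p q =>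
    hexK (f a b) (f c d) (f p q) (u a b) (u c d) (u p q)
  have hK : ∀ a b c d p q, 0 < K a b c d p q := fun a b c d p q =>
    hexK_pos (hf _ _) (hf _ _) (hf _ _) _ _ _
  have hK1 : ∀ a b c d p q, K a b c d p q ≤ 1 / 2 := fun a b c d p q =>
    hexK_le (hf _ _) (hf _ _) (hf _ _) _ _ _
  have hKc : ∀ a b c d p q, K a b c d p q = K c d a b p q := fun a b c d p q =>
    hexK_comm _ _ _ _ _ _
  have hd : ∀ a b c d p q, hexA (g a b) (g c d) (g p q) - hexA (f a b) (f c d) (f p q) =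
      K a b c d p q * (u c d - u a b) + K a b p q c d * (u p q - u a b) := fun a b c d p q =>
    hexAngle_diff (hf _ _) (hf _ _) (hf _ _) (hgu _ _) (hgu _ _) (hgu _ _)
  let e : Fin 3 → ℤ × ℤ := ![(1, 0), (0, 1), (-1, 1)]
  let C : Fin 3 → ℤ × ℤ → ℝ := ![
    fun v => K v.1 v.2 (v.1 + 1) v.2 v.1 (v.2 + 1) + K v.1 v.2 (v.1 + 1) v.2 (v.1 + 1) (v.2 - 1),
    fun v => K v.1 v.2 v.1 (v.2 + 1) (v.1 - 1) (v.2 + 1) + K v.1 v.2 v.1 (v.2 + 1) (v.1 + 1) v.2,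
    fun v => K v.1 v.2 (v.1 - 1) (v.2 + 1) (v.1 - 1) v.2
      + K v.1 v.2 (v.1 - 1) (v.2 + 1) v.1 (v.2 + 1)]
  let w : ℤ × ℤ → ℝ := fun v => Real.log M + 1 - u v.1 v.2
  have hw : ∀ v, 0 < w v := by
    intro v
    have h1 : u v.1 v.2 ≤ Real.log M :=
      Real.log_le_log (div_pos (hg _ _) (hf _ _)) (hM _ (hexPt_mem _ _))
    simp only [w]; linarith
  have key := hex_liouville e (by intro i; fin_cases i <;> simp [e, hexN]) C
    (by
      intro i v
      fin_cases i <;> exact add_pos (hK _ _ _ _ _ _) (hK _ _ _ _ _ _))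
    (by
      intro i v
      fin_cases i <;> exact (add_le_add (hK1 _ _ _ _ _ _) (hK1 _ _ _ _ _ _)).trans (by norm_num))
    w hw
    (by
      rintro ⟨a, b⟩
      have h := hΘ _ (hexPt_mem a b)
      rw [hexAngleSum_pt, hexAngleSum_pt] at h
      have d0 := hd a b (a + 1) b a (b + 1)
      have d1 := hd a b a (b + 1) (a - 1) (b + 1)
      have d2 := hd a b (a - 1) (b + 1) (a - 1) b
      have d3 := hd a b (a - 1) b a (b - 1)
      have d4 := hd a b a (b - 1) (a + 1) (b - 1)
      have d5 := hd a b (a + 1) (b - 1) (a + 1) b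
      simp only [f, g] at d0 d1 d2 d3 d4 d5
      rw [Fin.sum_univ_three]
      have c0 : C 0 ((a, b) - e 0) = K a b (a - 1) b (a - 1) (b + 1) + K a b (a - 1) b a (b - 1) := by
        rw [hKc a b, hKc a b (a - 1) b a (b - 1)]
        simp [C, e]
      have c1 : C 1 ((a, b) - e 1) = K a b a (b - 1) (a - 1) b + K a b a (b - 1) (a + 1) (b - 1) := by
        rw [hKc a b, hKc a b a (b - 1) (a + 1) (b - 1)]
        simp [C, e]
      have c2 : C 2 ((a, b) - e 2) = K a b (a + 1) (b - 1) a (b - 1)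
          + K a b (a + 1) (b - 1) (a + 1) b := by
        rw [hKc a b, hKc a b (a + 1) (b - 1) (a + 1) b]
        simp [C, e]
      rw [c0, c1, c2]
      have w0 : w ((a, b) + e 0) = Real.log M + 1 - u (a + 1) b := by simp [w, e]
      have w1 : w ((a, b) + e 1) = Real.log M + 1 - u a (b + 1) := by simp [w, e]
      have w2 : w ((a, b) + e 2) = Real.log M + 1 - u (a - 1) (b + 1) := by
        simp [w, e, sub_eq_add_neg]
      have w3 : w ((a, b) - e 0) = Real.log M + 1 - u (a - 1) b := by simp [w, e]
      have w4 : w ((a, b) - e 1) = Real.log M + 1 - u a (b - 1) := by simp [w, e]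
      have w5 : w ((a, b) - e 2) = Real.log M + 1 - u (a + 1) (b - 1) := by simp [w, e]
      have w6 : w (a, b) = Real.log M + 1 - u a b := rfl
      have C0 : C 0 (a, b) = K a b (a + 1) b a (b + 1) + K a b (a + 1) b (a + 1) (b - 1) := rfl
      have C1 : C 1 (a, b) = K a b a (b + 1) (a - 1) (b + 1) + K a b a (b + 1) (a + 1) b := rfl
      have C2 : C 2 (a, b) = K a b (a - 1) (b + 1) (a - 1) b
          + K a b (a - 1) (b + 1) a (b + 1) := rfl
      rw [w0, w1, w2, w3, w4, w5, w6, C0, C1, C2]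
      linear_combination h + d0 + d1 + d2 + d3 + d4 + d5)
  have k0 : ∀ a b, u (a + 1) b = u a b := by
    intro a b
    have := key 0 (a, b)
    simp [w, e] at this; exact this
  have k1 : ∀ a b, u a (b + 1) = u a b := by
    intro a b
    have := key 1 (a, b)
    simp [w, e] at this; exact this
  have m0 : ∀ a b, u a b = u 0 b := by
    intro a b
    induction a using Int.induction_on with
    | zero => rfl
    | succ n ih => rw [k0, ih]
    | pred n ih => rw [← ih, ← k0 (-(n : ℤ) - 1) b, sub_add_cancel]
  have m1 : ∀ b, u 0 b = u 0 0 := by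
    intro b
    induction b using Int.induction_on with
    | zero => rfl
    | succ n ih => rw [k1, ih]
    | pred n ih => rw [← ih, ← k1 0 (-(n : ℤ) - 1), sub_add_cancel]
  refine ⟨exp (u 0 0), ?_⟩
  rintro v ⟨a, b, rfl⟩
  have h1 := hgu a b
  rw [m0 a b, m1 b] at h1
  have h2 := hf a b
  change g a b / f a b = _
  rw [h1]; field_simp

/-- Corollary 3.2 for the hexagonal complex: if two positive labels `ρ` and
`σ` (the latter playing the role of `ρ̃`) have identical angle sum functions,
then either both ratio functions `σ/ρ` and `ρ/σ` are unbounded, or both are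
constant. -/
theorem hex_equal_angle_sums_ratios_unbounded_or_const
    (ρ σ : ℂ → ℝ)
    (hρ : ∀ v ∈ hexLattice, 0 < ρ v)
    (hσ : ∀ v ∈ hexLattice, 0 < σ v)
    (hΘ : ∀ v ∈ hexLattice, hexAngleSum ρ v = hexAngleSum σ v) :
    (¬(∃ M : ℝ, ∀ v ∈ hexLattice, σ v / ρ v ≤ M) ∧
       ¬(∃ M : ℝ, ∀ v ∈ hexLattice, ρ v / σ v ≤ M)) ∨
    ((∃ c : ℝ, ∀ v ∈ hexLattice, σ v / ρ v = c) ∧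
       (∃ c : ℝ, ∀ v ∈ hexLattice, ρ v / σ v = c)) := by
  have inv : ∀ α β : ℂ → ℝ, (∃ c : ℝ, ∀ v ∈ hexLattice, α v / β v = c) →
      ∃ c : ℝ, ∀ v ∈ hexLattice, β v / α v = c := by
    rintro α β ⟨c, hc⟩
    exact ⟨c⁻¹, fun v hv => by rw [← hc v hv, inv_div]⟩
  by_cases h1 : ∃ M : ℝ, ∀ v ∈ hexLattice, σ v / ρ v ≤ M
  · obtain ⟨M, hM⟩ := h1
    have h := hex_core ρ σ hρ hσ hΘ M hM
    exact Or.inr ⟨h, inv _ _ h⟩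
  by_cases h2 : ∃ M : ℝ, ∀ v ∈ hexLattice, ρ v / σ v ≤ M
  · obtain ⟨M, hM⟩ := h2
    have h := hex_core σ ρ hσ hρ (fun v hv => (hΘ v hv).symm) M hM
    exact Or.inr ⟨inv _ _ h, h⟩
  exact Or.inl ⟨h1, h2⟩
end
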